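/- arXiv:0906.3997 — 2 statements merged into one kernel-verified Lean document; each statement's English description precedes it below -/
import Mathlib

section
/- Let H be a complex Hilbert space and T : H → H a bounded positive (nonnegative) self-adjoint operator. Let φ : ℝ → ℝ be an even Schwartz function whose Fourier cosine transform φ̂(t) = (2π)^{−1/2} ∫_ℝ φ(λ)·cos(tλ) dλ is smooth and compactly supported. Then, in the continuous functional calculus for T, the operator obtained by applying to T the function x ↦ φ(√x) equals the Bochner integral (2π)^{−1/2} ∫_ℝ φ̂(t) · C_t dt, where C_t is the operator obtained by applying to T the function x ↦ cos(t·√x). -/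
/-!
The functional calculus commutes with Bochner integration of a family of functions that is jointly
continuous and dominated by an integrable bound. This reduces the operator identity to the scalar
inversion formula `φ s = (2π)^{-1/2} ∫ φ̂(t) cos(t s) dt` at `s = √x`.

The scalar formula is Mathlib's Fourier inversion theorem after normalization. As `φ` is even, the
sine part of its Fourier integral vanishes, so that `𝓕 φ (w) = √(2π) φ̂(2πw)`, which is continuous
with compact support and hence integrable. The substitution `t = 2πw` in the inverse transform,
followed by taking real parts, gives the formula.
-/

open MeasureTheory

/-- For an even function the Fourier integral, in the normalization `e^{-2πivw}`, is the
cosine integral at frequency `2πw`. -/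
lemma fourier_eq_cos_integral_of_even (φ : SchwartzMap ℝ ℝ) (hφ : ∀ x : ℝ, φ (-x) = φ x) (w : ℝ) :
    FourierTransform.fourier (fun x : ℝ => (φ x : ℂ)) w =
      ((∫ l : ℝ, φ l * Real.cos (2 * Real.pi * w * l) : ℝ) : ℂ) := by
  have hc : Integrable (fun l : ℝ => φ l * Real.cos (2 * Real.pi * w * l)) :=
    φ.integrable.mul_bdd (c := 1) (by fun_prop)
      (.of_forall fun x => by simpa using Real.abs_cos_le_one _)
  have hs : Integrable (fun l : ℝ => φ l * Real.sin (2 * Real.pi * w * l)) :=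
    φ.integrable.mul_bdd (c := 1) (by fun_prop)
      (.of_forall fun x => by simpa using Real.abs_sin_le_one _)
  have hs0 : ∫ l : ℝ, φ l * Real.sin (2 * Real.pi * w * l) = 0 := by
    have h := integral_neg_eq_self (fun l : ℝ => φ l * Real.sin (2 * Real.pi * w * l)) volume
    simp only [hφ, mul_neg, Real.sin_neg, integral_neg] at h
    linarith
  rw [Real.fourier_real_eq_integral_exp_smul]
  have hpt (v : ℝ) : Complex.exp (↑(-2 * Real.pi * v * w) * Complex.I) • (φ v : ℂ) =
      ((φ v * Real.cos (2 * Real.pi * w * v) : ℝ) : ℂ) -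
        ((φ v * Real.sin (2 * Real.pi * w * v) : ℝ) : ℂ) * Complex.I := by
    rw [show -2 * Real.pi * v * w = -(2 * Real.pi * w * v) by ring, Complex.exp_mul_I,
      ← Complex.ofReal_cos, ← Complex.ofReal_sin, Real.cos_neg, Real.sin_neg]
    push_cast [smul_eq_mul]
    ring
  simp_rw [hpt]
  rw [integral_sub hc.ofReal (hs.ofReal.mul_const _), integral_mul_const, integral_complex_ofReal,
    integral_complex_ofReal, hs0]
  simp

/-- The scalar cosine inversion formula. -/
lemma eq_integral_cosTransform_mul_cos (φ : SchwartzMap ℝ ℝ) (hφ : ∀ x : ℝ, φ (-x) = φ x)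
    (φhat : ℝ → ℝ)
    (hφhat : ∀ t : ℝ, φhat t =
        (Real.sqrt (2 * Real.pi))⁻¹ * ∫ l : ℝ, φ l * Real.cos (t * l))
    (hcont : Continuous φhat) (hsupp : HasCompactSupport φhat) (s : ℝ) :
    φ s = (Real.sqrt (2 * Real.pi))⁻¹ * ∫ t : ℝ, φhat t * Real.cos (t * s) := by
  have hpi : 0 < 2 * Real.pi := by positivity
  have hr : 0 < Real.sqrt (2 * Real.pi) := Real.sqrt_pos.2 hpi
  have hF : FourierTransform.fourier (fun x : ℝ => (φ x : ℂ)) =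
      fun w => ((Real.sqrt (2 * Real.pi) * φhat (2 * Real.pi * w) : ℝ) : ℂ) := by
    ext w
    rw [fourier_eq_cos_integral_of_even φ hφ, hφhat, mul_inv_cancel_left₀ hr.ne']
  have hint : Integrable φhat := hcont.integrable_of_hasCompactSupport hsupp
  have hFint : Integrable (FourierTransform.fourier (fun x : ℝ => (φ x : ℂ))) := by
    rw [hF]
    exact ((hint.comp_mul_left' hpi.ne').const_mul _).ofReal
  have hinv := congrFun (Continuous.fourierInv_fourier_eq
    (f := fun x : ℝ => (φ x : ℂ)) (by fun_prop) φ.integrable.ofReal hFint) s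
  rw [hF, Real.fourierInv_eq_fourier_neg, Real.fourier_real_eq_integral_exp_smul] at hinv
  have hinv' := congrArg Complex.re hinv
  have hint' : Integrable (fun v : ℝ => Complex.exp (↑(-2 * Real.pi * v * -s) * Complex.I) •
      ((Real.sqrt (2 * Real.pi) * φhat (2 * Real.pi * v) : ℝ) : ℂ)) := by
    refine ((hint.comp_mul_left' hpi.ne').const_mul _).ofReal.bdd_mul (c := 1) (by fun_prop)
      (.of_forall fun x => by rw [Complex.norm_exp_ofReal_mul_I])
  rw [← RCLike.re_eq_complex_re, ← integral_re hint'] at hinv'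
  simp only [smul_eq_mul, RCLike.re_eq_complex_re, Complex.re_mul_ofReal,
    Complex.exp_ofReal_mul_I_re, Complex.ofReal_re] at hinv'
  rw [← hinv']
  have hpt (v : ℝ) : Real.cos (-2 * Real.pi * v * -s) *
      (Real.sqrt (2 * Real.pi) * φhat (2 * Real.pi * v)) =
      Real.sqrt (2 * Real.pi) *
        (fun t => φhat t * Real.cos (t * s)) (2 * Real.pi * v) := by
    rw [show -2 * Real.pi * v * -s = 2 * Real.pi * v * s by ring]
    ring
  rw [integral_congr_ae (.of_forall hpt), integral_const_mul,
    Measure.integral_comp_mul_left (fun t => φhat t * Real.cos (t * s)) (2 * Real.pi),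
    abs_of_pos (inv_pos.2 hpi), smul_eq_mul, ← mul_assoc]
  rw [← div_eq_mul_inv, Real.sqrt_div_self]

/-- For a bounded nonnegative self-adjoint operator `T` on a complex Hilbert space and an
even Schwartz function `φ` whose Fourier cosine transform `φ̂` is smooth and compactly
supported, the operator `φ(√T)` (continuous functional calculus) equals the Bochner
integral `(2π)^{-1/2} ∫ φ̂(t) cos(t √T) dt`. -/
theorem cfc_sqrt_eq_integral_wave_operators
    {H : Type*} [NormedAddCommGroup H] [InnerProductSpace ℂ H] [CompleteSpace H]
    (T : H →L[ℂ] H) (hT : IsSelfAdjoint T) (hTpos : (0 : H →L[ℂ] H) ≤ T)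
    (φ : SchwartzMap ℝ ℝ) (hφeven : ∀ x : ℝ, φ (-x) = φ x)
    (φhat : ℝ → ℝ)
    (hφhat : ∀ t : ℝ, φhat t =
        (Real.sqrt (2 * Real.pi))⁻¹ * ∫ l : ℝ, φ l * Real.cos (t * l))
    (hφhat_smooth : ContDiff ℝ (⊤ : ℕ∞) φhat) (hφhat_supp : HasCompactSupport φhat) :
    cfc (fun x : ℝ => φ (Real.sqrt x)) T =
      (Real.sqrt (2 * Real.pi))⁻¹ •
        ∫ t : ℝ, φhat t • cfc (fun x : ℝ => Real.cos (t * Real.sqrt x)) T := by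
  have hcont : Continuous φhat := hφhat_smooth.continuous
  have hint : Integrable φhat := hcont.integrable_of_hasCompactSupport hφhat_supp
  have hinv := eq_integral_cosTransform_mul_cos φ hφeven φhat hφhat hcont hφhat_supp
  have hcos (t : ℝ) : φhat t • cfc (fun x : ℝ => Real.cos (t * Real.sqrt x)) T =
      cfc (fun x : ℝ => φhat t * Real.cos (t * Real.sqrt x)) T :=
    (cfc_const_mul (φhat t) _ T (by fun_prop)).symm
  simp_rw [hcos, fun x : ℝ => hinv (Real.sqrt x)]
  have hswap := cfc_integral (μ := (volume : Measure ℝ))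
    (fun t x : ℝ => φhat t * Real.cos (t * Real.sqrt x)) (fun t => ‖φhat t‖) T
    (by unfold Function.uncurry; fun_prop)
    (.of_forall fun t x _ => by
      rw [norm_mul]
      exact mul_le_of_le_one_right (norm_nonneg _) (Real.abs_cos_le_one _))
    hint.norm.hasFiniteIntegral hT
  rw [← hswap]
  refine cfc_const_mul _ _ T ?_
  -- By the inversion formula the parametric integral is a constant multiple of `φ (√x)`.
  have hr : Real.sqrt (2 * Real.pi) ≠ 0 := (Real.sqrt_pos.2 (by positivity)).ne'
  have heq : (fun x : ℝ => ∫ t : ℝ, φhat t * Real.cos (t * Real.sqrt x)) =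
      fun x => Real.sqrt (2 * Real.pi) * φ (Real.sqrt x) := by
    ext x
    rw [hinv, mul_inv_cancel_left₀ hr]
  rw [heq]
  fun_prop
end

section
/- Let X be a nonempty proper metric space and Γ a group acting on X by isometries such that the action is properly discontinuous (for all compact sets K, L ⊆ X the set {γ ∈ Γ : γK ∩ L ≠ ∅} is finite) and cocompact (there is a compact set K₀ ⊆ X with Γ·K₀ = X). Then for every c > 0, the set of conjugacy classes of elements γ ∈ Γ for which there exists x ∈ X with d(x, γ·x) ≤ c is finite. -/
/-- If a group `Γ` acts by isometries on a nonempty proper metric space `X`, properly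
discontinuously and cocompactly, then for every `c > 0` only finitely many conjugacy
classes of `Γ` contain an element that displaces some point of `X` by at most `c`. -/
theorem finitely_many_conjugacy_classes_of_bounded_displacement
    {X : Type*} [MetricSpace X] [ProperSpace X] [Nonempty X]
    {Γ : Type*} [Group Γ] [MulAction Γ X]
    (hiso : ∀ γ : Γ, Isometry fun x : X => γ • x)
    (hpd : ∀ K L : Set X, IsCompact K → IsCompact L →
      {γ : Γ | ((fun x : X => γ • x) '' K ∩ L).Nonempty}.Finite)
    (hcc : ∃ K₀ : Set X, IsCompact K₀ ∧ ∀ x : X, ∃ γ : Γ, γ • x ∈ K₀) :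
    ∀ c > (0 : ℝ),
      {q : ConjClasses Γ | ∃ γ : Γ, q = ConjClasses.mk γ ∧
        ∃ x : X, dist x (γ • x) ≤ c}.Finite := by
  intro c _
  obtain ⟨K₀, hK₀, hcov⟩ := hcc
  -- The closed `c`-neighbourhood of `K₀` is compact because `X` is proper.
  refine ((hpd K₀ (Metric.cthickening c K₀) hK₀ hK₀.cthickening).image ConjClasses.mk).subset ?_
  rintro q ⟨γ, rfl, x, hx⟩
  -- If `δ` moves `x` into `K₀`, then `δ * γ * δ⁻¹` displaces `δ • x ∈ K₀` by at most `c`.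
  obtain ⟨δ, hδ⟩ := hcov x
  refine ⟨δ * γ * δ⁻¹, ⟨δ • γ • x, ⟨δ • x, hδ, by simp [mul_smul]⟩, ?_⟩,
    ConjClasses.mk_eq_mk_iff_isConj.2 (isConj_iff.2 ⟨δ, rfl⟩).symm⟩
  refine Metric.mem_cthickening_of_dist_le _ (δ • x) _ _ hδ ?_
  rw [dist_comm]
  exact ((hiso δ).dist_eq x (γ • x)).trans_le hx
end
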